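/- With the circuit-cutting setup and Pauli eigendecomposition data below, for any complex matrix O₁ indexed by A and any complex matrix O₂ indexed by C × B, the expectation of the product observable reconstructs from the fragments: tr((O₁ ⊗ O₂) · ρ) = 2^{-K} · Σ_{f : Fin K → Fin 4} Σ_{r, s : Fin K → ({+1,-1})} w_f(r) · w_f(s) · tr(O₁ · ρ₁(P_f(r))) · tr(O₂ · ρ₂(P_f(s))). -/

import Mathlib

open Matrix BigOperators Kronecker

/-- A register of `n` qubits: length-`n` bitstrings. -/
abbrev Reg (n : ℕ) := Fin n → Fin 2

/-- The four Pauli matrices `I, X, Y, Z` as `2 × 2` complex matrices. -/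
noncomputable def pauli : Fin 4 → Matrix (Fin 2) (Fin 2) ℂ :=
  ![!![1, 0; 0, 1], !![0, 1; 1, 0], !![0, -Complex.I; Complex.I, 0], !![1, 0; 0, -1]]

/-- The Pauli string `S_f`: the `K`-fold Kronecker product of the matrices `σ_{f k}`. -/
noncomputable def pauliString {K : ℕ} (f : Fin K → Fin 4) :
    Matrix (Reg K) (Reg K) ℂ :=
  Matrix.of fun b b' => ∏ k, pauli (f k) (b k) (b' k)

/-- The projector `|0⟩⟨0|` onto the all-zeros state of a register. -/
noncomputable def zeroProj (α : Type*) [Zero α] [DecidableEq α] : Matrix α α ℂ :=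
  Matrix.of fun a a' => if a = 0 ∧ a' = 0 then 1 else 0

/-- Upstream fragment data `ρ₁(M)`: the partial trace over the cut register `C` of
`(1_A ⊗ M) · U₁|0⟩⟨0|U₁ᴴ`. -/
noncomputable def rho1 {n₁ K : ℕ}
    (U₁ : Matrix (Reg n₁ × Reg K) (Reg n₁ × Reg K) ℂ)
    (M : Matrix (Reg K) (Reg K) ℂ) : Matrix (Reg n₁) (Reg n₁) ℂ :=
  Matrix.of fun a a' => ∑ c, ∑ c',
    M c' c * (U₁ * zeroProj (Reg n₁ × Reg K) * U₁ᴴ) (a, c) (a', c')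

/-- Downstream fragment data `ρ₂(M) = U₂ (M ⊗ |0⟩⟨0|_B) U₂ᴴ`. -/
noncomputable def rho2 {K n₂ : ℕ}
    (U₂ : Matrix (Reg K × Reg n₂) (Reg K × Reg n₂) ℂ)
    (M : Matrix (Reg K) (Reg K) ℂ) : Matrix (Reg K × Reg n₂) (Reg K × Reg n₂) ℂ :=
  U₂ * (M ⊗ₖ zeroProj (Reg n₂)) * U₂ᴴ

/-- The full state
`ρ = (1_A ⊗ U₂)(U₁ ⊗ 1_B)|0⟩⟨0|(U₁ ⊗ 1_B)ᴴ(1_A ⊗ U₂)ᴴ`, indexed by `A × (C × B)`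
(with `U₁ ⊗ 1_B` reindexed along `(A × C) × B ≃ A × (C × B)`). -/
noncomputable def fullState {n₁ K n₂ : ℕ}
    (U₁ : Matrix (Reg n₁ × Reg K) (Reg n₁ × Reg K) ℂ)
    (U₂ : Matrix (Reg K × Reg n₂) (Reg K × Reg n₂) ℂ) :
    Matrix (Reg n₁ × (Reg K × Reg n₂)) (Reg n₁ × (Reg K × Reg n₂)) ℂ :=
  let V : Matrix (Reg n₁ × (Reg K × Reg n₂)) (Reg n₁ × (Reg K × Reg n₂)) ℂ :=
    Matrix.reindex (Equiv.prodAssoc _ _ _) (Equiv.prodAssoc _ _ _)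
      (U₁ ⊗ₖ (1 : Matrix (Reg n₂) (Reg n₂) ℂ))
  ((1 : Matrix (Reg n₁) (Reg n₁) ℂ) ⊗ₖ U₂) * V *
    zeroProj (Reg n₁ × (Reg K × Reg n₂)) * Vᴴ *
    ((1 : Matrix (Reg n₁) (Reg n₁) ℂ) ⊗ₖ U₂)ᴴ

/-- The weight `w_f(r) = ∏_k λ_{f k}(r k)` attached to a string of eigenvalue labels
`r : Fin K → ℤˣ` (the two-element type `{+1, -1}`). -/
def cutWeight {K : ℕ} (lam : Fin 4 → ℤˣ → ℝ) (f : Fin K → Fin 4) (r : Fin K → ℤˣ) : ℝ :=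
  ∏ k, lam (f k) (r k)

/-- The Kronecker product `P_f(r)` of the rank-one eigenprojectors `v_{f k}(r k) v_{f k}(r k)ᴴ`. -/
noncomputable def pauliProj {K : ℕ} (v : Fin 4 → ℤˣ → Fin 2 → ℂ)
    (f : Fin K → Fin 4) (r : Fin K → ℤˣ) : Matrix (Reg K) (Reg K) ℂ :=
  Matrix.of fun c c' => ∏ k, v (f k) (r k) (c k) * star (v (f k) (r k) (c' k))

theorem conj_zeroProj {α : Type*} [Zero α] [DecidableEq α] [Fintype α]
    (W : Matrix α α ℂ) (x y : α) :
    (W * zeroProj α * Wᴴ) x y = W x 0 * star (W y 0) := by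
  have h : ∀ i, (W * zeroProj α) x i = if i = 0 then W x 0 else 0 := by
    intro i
    simp only [Matrix.mul_apply, zeroProj, Matrix.of_apply]
    by_cases hi : i = 0 <;> simp [hi]
  rw [Matrix.mul_apply]
  simp [h, Matrix.conjTranspose_apply]

theorem col_full {n₁ K n₂ : ℕ}
    (U₁ : Matrix (Reg n₁ × Reg K) (Reg n₁ × Reg K) ℂ)
    (U₂ : Matrix (Reg K × Reg n₂) (Reg K × Reg n₂) ℂ) (a : Reg n₁) (x : Reg K × Reg n₂) :
    ((((1 : Matrix (Reg n₁) (Reg n₁) ℂ) ⊗ₖ U₂) *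
      (Matrix.reindex (Equiv.prodAssoc _ _ _) (Equiv.prodAssoc _ _ _)
      (U₁ ⊗ₖ (1 : Matrix (Reg n₂) (Reg n₂) ℂ))) :
        Matrix (Reg n₁ × (Reg K × Reg n₂)) (Reg n₁ × (Reg K × Reg n₂)) ℂ)) (a, x) 0
      = ∑ c, U₂ x (c, 0) * U₁ (a, c) 0 := by
  rw [Matrix.mul_apply, Fintype.sum_prod_type, Finset.sum_eq_single a]
  · rw [Fintype.sum_prod_type]
    refine Finset.sum_congr rfl fun c _ => ?_
    rw [Finset.sum_eq_single 0]
    · simp [Matrix.kroneckerMap_apply]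
      exact Or.inl rfl
    · intro b _ hb
      simp [Matrix.kroneckerMap_apply, Matrix.one_apply, hb]
    · simp
  · intro b _ hb
    simp [Matrix.kroneckerMap_apply, Matrix.one_apply, hb.symm]
  · simp

theorem fullState_apply {n₁ K n₂ : ℕ}
    (U₁ : Matrix (Reg n₁ × Reg K) (Reg n₁ × Reg K) ℂ)
    (U₂ : Matrix (Reg K × Reg n₂) (Reg K × Reg n₂) ℂ) (a a' : Reg n₁) (x y : Reg K × Reg n₂) :
    fullState U₁ U₂ (a, x) (a', y) =
      (∑ c, U₂ x (c, 0) * U₁ (a, c) 0) * star (∑ c, U₂ y (c, 0) * U₁ (a', c) 0) := by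
  unfold fullState
  rw [Matrix.mul_assoc _ _ᴴ _ᴴ, ← Matrix.conjTranspose_mul, conj_zeroProj, col_full, col_full]

theorem rho2_apply {K n₂ : ℕ}
    (U₂ : Matrix (Reg K × Reg n₂) (Reg K × Reg n₂) ℂ)
    (M : Matrix (Reg K) (Reg K) ℂ) (x y : Reg K × Reg n₂) :
    rho2 U₂ M x y = ∑ c, ∑ c', M c c' * (U₂ x (c, 0) * star (U₂ y (c', 0))) := by
  have h : ∀ c' b, (U₂ * (M ⊗ₖ zeroProj (Reg n₂))) x (c', b)
      = if b = 0 then ∑ c, U₂ x (c, 0) * M c c' else 0 := by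
    intro c' b
    rw [Matrix.mul_apply, Fintype.sum_prod_type]
    by_cases hb : b = 0 <;> simp [hb, zeroProj, Matrix.kroneckerMap_apply]
  unfold rho2
  rw [Matrix.mul_apply, Fintype.sum_prod_type]
  simp only [h, Matrix.conjTranspose_apply, ite_mul, zero_mul, Finset.sum_ite_eq',
    Finset.mem_univ, if_true, Finset.sum_mul]
  rw [Finset.sum_comm]
  exact Finset.sum_congr rfl fun c _ => Finset.sum_congr rfl fun c' _ => by ring

theorem trace_rho1 {n₁ K : ℕ}
    (U₁ : Matrix (Reg n₁ × Reg K) (Reg n₁ × Reg K) ℂ) (O₁ : Matrix (Reg n₁) (Reg n₁) ℂ)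
    (M : Matrix (Reg K) (Reg K) ℂ) :
    Matrix.trace (O₁ * rho1 U₁ M) =
      ∑ p : Reg K × Reg K, M p.2 p.1 *
        ∑ q : Reg n₁ × Reg n₁, O₁ q.1 q.2 * (U₁ (q.2, p.1) 0 * star (U₁ (q.1, p.2) 0)) := by
  simp only [Matrix.trace, Matrix.diag_apply, Matrix.mul_apply (M := O₁), rho1, Matrix.of_apply,
    conj_zeroProj]
  simp only [← Fintype.sum_prod_type' (f := fun (x y : Reg K) => _),
    ← Fintype.sum_prod_type' (f := fun (x y : Reg n₁) => _), Finset.mul_sum]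
  rw [Finset.sum_comm]
  exact Finset.sum_congr rfl fun c _ => Finset.sum_congr rfl fun c' _ => by ring

theorem trace_rho2 {K n₂ : ℕ}
    (U₂ : Matrix (Reg K × Reg n₂) (Reg K × Reg n₂) ℂ)
    (O₂ : Matrix (Reg K × Reg n₂) (Reg K × Reg n₂) ℂ)
    (M : Matrix (Reg K) (Reg K) ℂ) :
    Matrix.trace (O₂ * rho2 U₂ M) =
      ∑ p : Reg K × Reg K, M p.1 p.2 *
        ∑ q : (Reg K × Reg n₂) × (Reg K × Reg n₂),
          O₂ q.1 q.2 * (U₂ q.2 (p.1, 0) * star (U₂ q.1 (p.2, 0))) := by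
  simp only [Matrix.trace, Matrix.diag_apply, Matrix.mul_apply, rho2_apply]
  simp only [← Fintype.sum_prod_type' (f := fun (x y : Reg K) => _),
    ← Fintype.sum_prod_type' (f := fun (x y : Reg K × Reg n₂) => _), Finset.mul_sum]
  rw [Finset.sum_comm]
  exact Finset.sum_congr rfl fun c _ => Finset.sum_congr rfl fun c' _ => by ring

theorem trace_full {n₁ K n₂ : ℕ}
    (U₁ : Matrix (Reg n₁ × Reg K) (Reg n₁ × Reg K) ℂ)
    (U₂ : Matrix (Reg K × Reg n₂) (Reg K × Reg n₂) ℂ)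
    (O₁ : Matrix (Reg n₁) (Reg n₁) ℂ)
    (O₂ : Matrix (Reg K × Reg n₂) (Reg K × Reg n₂) ℂ) :
    Matrix.trace ((O₁ ⊗ₖ O₂) * fullState U₁ U₂) =
      ∑ p : Reg K × Reg K,
        (∑ q : Reg n₁ × Reg n₁, O₁ q.1 q.2 * (U₁ (q.2, p.1) 0 * star (U₁ (q.1, p.2) 0))) *
        ∑ q : (Reg K × Reg n₂) × (Reg K × Reg n₂),
          O₂ q.1 q.2 * (U₂ q.2 (p.1, 0) * star (U₂ q.1 (p.2, 0))) := by
  have h1 : Matrix.trace ((O₁ ⊗ₖ O₂) * fullState U₁ U₂) =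
      ∑ q : Reg n₁ × Reg n₁, ∑ q' : (Reg K × Reg n₂) × (Reg K × Reg n₂), ∑ p : Reg K × Reg K,
        (O₁ q.1 q.2 * (U₁ (q.2, p.1) 0 * star (U₁ (q.1, p.2) 0))) *
        (O₂ q'.1 q'.2 * (U₂ q'.2 (p.1, 0) * star (U₂ q'.1 (p.2, 0)))) := by
    simp only [Matrix.trace, Matrix.diag_apply, Matrix.mul_apply]
    rw [Fintype.sum_prod_type, Fintype.sum_prod_type]
    refine Finset.sum_congr rfl fun a _ => ?_
    simp only [Fintype.sum_prod_type (α₁ := Reg n₁)]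
    rw [Finset.sum_comm]
    refine Finset.sum_congr rfl fun a' _ => ?_
    rw [Fintype.sum_prod_type (α₁ := Reg K × Reg n₂)]
    refine Finset.sum_congr rfl fun x _ => Finset.sum_congr rfl fun y _ => ?_
    rw [fullState_apply, star_sum, Finset.sum_mul_sum, Fintype.sum_prod_type, Finset.mul_sum]
    refine Finset.sum_congr rfl fun c _ => ?_
    rw [Finset.mul_sum]
    refine Finset.sum_congr rfl fun c' _ => ?_
    simp only [Matrix.kroneckerMap_apply, star_mul']
    ring
  rw [h1]
  simp only [Finset.sum_mul_sum]
  rw [Finset.sum_comm' (t' := Finset.univ) (s' := fun _ => Finset.univ) (by simp)]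
  rw [Finset.sum_comm]
  conv_rhs => rw [Finset.sum_comm]
  refine Finset.sum_congr rfl fun q _ => ?_
  rw [Finset.sum_comm]

theorem pauli_complete (a b c d : Fin 2) :
    ∑ j, pauli j a b * pauli j c d = if a = d ∧ b = c then 2 else 0 := by
  rw [Fin.sum_univ_four]
  fin_cases a <;> fin_cases b <;> fin_cases c <;> fin_cases d <;> simp [pauli] <;> norm_num

theorem pauliString_complete {K : ℕ} (a b c d : Reg K) :
    ∑ f : Fin K → Fin 4, pauliString f a b * pauliString f c d =
      if a = d ∧ b = c then (2 : ℂ) ^ K else 0 := by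
  simp only [pauliString, Matrix.of_apply, ← Finset.prod_mul_distrib]
  rw [← Fintype.prod_sum (fun k j => pauli j (a k) (b k) * pauli j (c k) (d k))]
  simp only [pauli_complete]
  split_ifs with h
  · obtain ⟨rfl, rfl⟩ := h
    simp
  · obtain ⟨k, hk⟩ : ∃ k, ¬ (a k = d k ∧ b k = c k) := by
      by_contra! hc
      exact h ⟨funext fun k => (hc k).1, funext fun k => (hc k).2⟩
    exact Finset.prod_eq_zero (Finset.mem_univ k) (if_neg hk)

theorem sum_weight {K : ℕ} (v : Fin 4 → ℤˣ → Fin 2 → ℂ) (lam : Fin 4 → ℤˣ → ℝ)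
    (hdecomp : ∀ j, pauli j =
      ∑ r : ℤˣ, (lam j r : ℂ) • Matrix.of (fun i i' => v j r i * star (v j r i')))
    (f : Fin K → Fin 4) (c c' : Reg K) :
    ∑ r : Fin K → ℤˣ, (cutWeight lam f r : ℂ) * pauliProj v f r c c' = pauliString f c c' := by
  simp only [pauliString, pauliProj, cutWeight, Matrix.of_apply, Complex.ofReal_prod,
    ← Finset.prod_mul_distrib]
  rw [← Fintype.prod_sum (fun k r =>
    (lam (f k) r : ℂ) * (v (f k) r (c k) * star (v (f k) r (c' k))))]
  refine Finset.prod_congr rfl fun k _ => ?_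
  rw [hdecomp (f k), Matrix.sum_apply]
  simp

/-- Bipartite circuit-cutting reconstruction of an expectation value:
`tr((O₁ ⊗ O₂) ρ) = 2^{-K} ∑_{f, r, s} w_f(r) w_f(s) tr(O₁ ρ₁(P_f(r))) tr(O₂ ρ₂(P_f(s)))`. -/
theorem cut_reconstruction {n₁ K n₂ : ℕ}
    (U₁ : Matrix (Reg n₁ × Reg K) (Reg n₁ × Reg K) ℂ)
    (U₂ : Matrix (Reg K × Reg n₂) (Reg K × Reg n₂) ℂ)
    (hU₁ : U₁ᴴ * U₁ = 1) (hU₁' : U₁ * U₁ᴴ = 1)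
    (hU₂ : U₂ᴴ * U₂ = 1) (hU₂' : U₂ * U₂ᴴ = 1)
    (v : Fin 4 → ℤˣ → Fin 2 → ℂ) (lam : Fin 4 → ℤˣ → ℝ)
    (hunit : ∀ j r, ∑ i, v j r i * star (v j r i) = 1)
    (horth : ∀ j, ∑ i, v j 1 i * star (v j (-1) i) = 0)
    (hdecomp : ∀ j, pauli j =
      ∑ r : ℤˣ, (lam j r : ℂ) • Matrix.of (fun i i' => v j r i * star (v j r i')))
    (O₁ : Matrix (Reg n₁) (Reg n₁) ℂ)
    (O₂ : Matrix (Reg K × Reg n₂) (Reg K × Reg n₂) ℂ) :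
    Matrix.trace ((O₁ ⊗ₖ O₂) * fullState U₁ U₂) =
      ((2 : ℂ) ^ K)⁻¹ *
        ∑ f : Fin K → Fin 4, ∑ r : Fin K → ℤˣ, ∑ s : Fin K → ℤˣ,
          ((cutWeight lam f r * cutWeight lam f s : ℝ) : ℂ) *
            Matrix.trace (O₁ * rho1 U₁ (pauliProj v f r)) *
            Matrix.trace (O₂ * rho2 U₂ (pauliProj v f s)) := by
  rw [trace_full]
  simp only [trace_rho1, trace_rho2]
  set t₁ : Reg K × Reg K → ℂ := fun p =>
    ∑ q : Reg n₁ × Reg n₁, O₁ q.1 q.2 * (U₁ (q.2, p.1) 0 * star (U₁ (q.1, p.2) 0)) with ht₁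
  set t₂ : Reg K × Reg K → ℂ := fun p =>
    ∑ q : (Reg K × Reg n₂) × (Reg K × Reg n₂),
      O₂ q.1 q.2 * (U₂ q.2 (p.1, 0) * star (U₂ q.1 (p.2, 0))) with ht₂
  change ∑ p, t₁ p * t₂ p = ((2 : ℂ) ^ K)⁻¹ *
    ∑ f : Fin K → Fin 4, ∑ r : Fin K → ℤˣ, ∑ s : Fin K → ℤˣ,
      ((cutWeight lam f r * cutWeight lam f s : ℝ) : ℂ) *
        (∑ p : Reg K × Reg K, pauliProj v f r p.2 p.1 * t₁ p) *
        (∑ p : Reg K × Reg K, pauliProj v f s p.1 p.2 * t₂ p)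
  have h1 : ∀ f : Fin K → Fin 4, ∑ r : Fin K → ℤˣ, (cutWeight lam f r : ℂ) *
      (∑ p : Reg K × Reg K, pauliProj v f r p.2 p.1 * t₁ p)
      = ∑ p : Reg K × Reg K, pauliString f p.2 p.1 * t₁ p := by
    intro f
    simp only [Finset.mul_sum, ← sum_weight v lam hdecomp, Finset.sum_mul]
    rw [Finset.sum_comm]
    simp only [mul_assoc]
  have h2 : ∀ f : Fin K → Fin 4, ∑ r : Fin K → ℤˣ, (cutWeight lam f r : ℂ) *
      (∑ p : Reg K × Reg K, pauliProj v f r p.1 p.2 * t₂ p)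
      = ∑ p : Reg K × Reg K, pauliString f p.1 p.2 * t₂ p := by
    intro f
    simp only [Finset.mul_sum, ← sum_weight v lam hdecomp, Finset.sum_mul]
    rw [Finset.sum_comm]
    simp only [mul_assoc]
  have h3 : ∀ f : Fin K → Fin 4, ∑ r : Fin K → ℤˣ, ∑ s : Fin K → ℤˣ,
      ((cutWeight lam f r * cutWeight lam f s : ℝ) : ℂ) *
        (∑ p : Reg K × Reg K, pauliProj v f r p.2 p.1 * t₁ p) *
        (∑ p : Reg K × Reg K, pauliProj v f s p.1 p.2 * t₂ p)
      = ∑ p : Reg K × Reg K, ∑ q : Reg K × Reg K,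
        (pauliString f p.2 p.1 * pauliString f q.1 q.2) * (t₁ p * t₂ q) := by
    intro f
    trans (∑ p : Reg K × Reg K, pauliString f p.2 p.1 * t₁ p) *
      (∑ p : Reg K × Reg K, pauliString f p.1 p.2 * t₂ p)
    · rw [← h1, ← h2, Finset.sum_mul_sum]
      refine Finset.sum_congr rfl fun r _ => Finset.sum_congr rfl fun s _ => ?_
      push_cast
      ring
    · rw [Finset.sum_mul_sum]
      refine Finset.sum_congr rfl fun r _ => Finset.sum_congr rfl fun s _ => ?_
      ring
  simp only [h3]
  rw [Finset.sum_comm, Finset.mul_sum]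
  refine Finset.sum_congr rfl fun p _ => ?_
  rw [Finset.sum_comm]
  simp only [← Finset.sum_mul, pauliString_complete]
  rw [Finset.sum_eq_single p]
  · simp
  · rintro ⟨q1, q2⟩ _ hq
    rw [if_neg, zero_mul]
    rintro ⟨e1, e2⟩
    exact hq (Prod.ext e2.symm e1.symm)
  · simp
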